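/- Under these hypotheses, every proper complementary interval I contains exactly one critical point ω of G; moreover this critical point is simple and is a strict local maximum of G along ℝ: the second derivative at t = 0 of the real function t ↦ G(ω + t) is strictly negative. -/

import Mathlib

open Metric Set Complex

/-- A real-valued function is harmonic on an open subset of `ℂ ≅ ℝ²` if it is
C² there and its Laplacian vanishes. -/
def IsHarmonicOn (G : ℂ → ℝ) (U : Set ℂ) : Prop :=
  ContDiffOn ℝ 2 G U ∧ ∀ z ∈ U,
    fderiv ℝ (fun w => fderiv ℝ G w 1) z 1 +
      fderiv ℝ (fun w => fderiv ℝ G w Complex.I) z Complex.I = 0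


/-- Locally the real part of a holomorphic function. -/
def LocRe (u : ℂ → ℝ) (z : ℂ) : Prop :=
  ∃ F : ℂ → ℂ, AnalyticAt ℂ F z ∧ ∀ᶠ w in nhds z, u w = (F w).re

lemma LocRe.neg {u : ℂ → ℝ} {z : ℂ} (h : LocRe u z) : LocRe (fun w => - u w) z := by
  obtain ⟨F, hF, h⟩ := h
  refine ⟨fun w => - F w, hF.neg, ?_⟩
  filter_upwards [h] with w hw
  simp [hw]

lemma LocRe.add {u v : ℂ → ℝ} {z : ℂ} (h : LocRe u z) (h' : LocRe v z) :
    LocRe (fun w => u w + v w) z := by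
  obtain ⟨F, hF, h⟩ := h
  obtain ⟨F', hF', h'⟩ := h'
  refine ⟨fun w => F w + F' w, hF.add hF', ?_⟩
  filter_upwards [h, h'] with w hw hw'
  simp [hw, hw']

lemma LocRe.conj {u : ℂ → ℝ} {z : ℂ} (h : LocRe u (starRingEnd ℂ z)) :
    LocRe (fun w => u (starRingEnd ℂ w)) z := by
  obtain ⟨F, hF, h⟩ := h
  have hc : Filter.Tendsto (fun w : ℂ => starRingEnd ℂ w) (nhds z) (nhds (starRingEnd ℂ z)) :=
    Complex.continuous_conj.continuousAt
  refine ⟨fun w => starRingEnd ℂ (F (starRingEnd ℂ w)), ?_, ?_⟩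
  · rw [Complex.analyticAt_iff_eventually_differentiableAt] at hF ⊢
    filter_upwards [hc.eventually hF] with w hw
    have := hw.conj_conj
    simpa [Function.comp_def] using this
  · filter_upwards [hc.eventually h] with w hw
    simp [hw]

lemma LocRe.strong {u : ℂ → ℝ} {z : ℂ} (h : LocRe u z) (hm : IsLocalMax u z) :
    ∀ᶠ w in nhds z, u w = u z := by
  obtain ⟨F, hF, h⟩ := h
  have hz := h.self_of_nhds
  have h1 : IsLocalMax (norm ∘ fun w => Complex.exp (F w)) z := by
    filter_upwards [h, hm] with w hw hw'
    simp only [Function.comp, Complex.norm_exp]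
    rw [← hw, ← hz]
    exact Real.exp_le_exp.2 hw'
  have h2 : ∀ᶠ w in nhds z, DifferentiableAt ℂ (fun w => Complex.exp (F w)) w := by
    filter_upwards [Complex.analyticAt_iff_eventually_differentiableAt.1 hF] with w hw
    exact hw.cexp
  filter_upwards [Complex.eventually_eq_of_isLocalMax_norm h2 h1, h] with w hw hw'
  have := congrArg norm hw
  simp only [Complex.norm_exp] at this
  rw [hw', hz]
  exact Real.exp_injective this

lemma max_principle {U : Set ℂ} (hU : IsOpen U) (hb : Bornology.IsBounded U) {u : ℂ → ℝ}
    (hc : ContinuousOn u (closure U)) (hh : ∀ z ∈ U, LocRe u z) {M : ℝ}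
    (hM : ∀ z ∈ frontier U, u z ≤ M) : ∀ z ∈ U, u z ≤ M := by
  intro z hz
  by_contra hlt
  push Not at hlt
  have hK : IsCompact (closure U) := hb.isCompact_closure
  obtain ⟨m, hm, hmax⟩ := hK.exists_isMaxOn ⟨z, subset_closure hz⟩ hc
  have hmM : M < u m := hlt.trans_le (hmax (subset_closure hz))
  have hSU : ∀ w ∈ closure U, u w = u m → w ∈ U := by
    intro w hw hwm
    by_contra hwU
    have : w ∈ frontier U := by rw [hU.frontier_eq]; exact ⟨hw, hwU⟩
    have := hM w this
    linarith
  let S : Set ℂ := closure U ∩ u ⁻¹' {u m}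
  have hSc : IsClosed S := hc.preimage_isClosed_of_isClosed isClosed_closure isClosed_singleton
  have hSK : IsCompact S := hK.of_isClosed_subset hSc inter_subset_left
  have hSo : IsOpen S := by
    rw [isOpen_iff_mem_nhds]
    rintro w ⟨hw, hwm⟩
    have hwU := hSU w hw hwm
    have hUn := hU.mem_nhds hwU
    have hl : IsLocalMax u w := by
      filter_upwards [hUn] with y hy
      rw [show u w = u m from hwm]
      exact hmax (subset_closure hy)
    filter_upwards [(hh w hwU).strong hl, hUn] with y hy hyU
    exact ⟨subset_closure hyU, hy.trans hwm⟩
  have := IsClopen.eq_univ ⟨hSc, hSo⟩ ⟨m, hm, rfl⟩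
  exact noncompact_univ ℂ (this ▸ hSK)

lemma min_principle {U : Set ℂ} (hU : IsOpen U) (hb : Bornology.IsBounded U) {u : ℂ → ℝ}
    (hc : ContinuousOn u (closure U)) (hh : ∀ z ∈ U, LocRe u z) {M : ℝ}
    (hM : ∀ z ∈ frontier U, M ≤ u z) : ∀ z ∈ U, M ≤ u z := by
  intro z hz
  have := max_principle hU hb (u := fun w => - u w) hc.neg (fun z hz => (hh z hz).neg) (M := -M)
    (fun z hz => neg_le_neg (hM z hz)) z hz
  linarith

lemma const_of_exp_eq {f g : ℝ → ℂ} (hf : Continuous f) (hg : Continuous g)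
    (h : ∀ t, Complex.exp (f t) = Complex.exp (g t)) : f 1 - f 0 = g 1 - g 0 := by
  have h1 : ∀ t, ∃ n : ℤ, f t - g t = n * (2 * Real.pi * Complex.I) := by
    intro t
    rw [← Complex.exp_eq_one_iff, Complex.exp_sub, h, div_self (Complex.exp_ne_zero _)]
  choose n hn using h1
  have hn' : ∀ t, (n t : ℝ) = (f t - g t).im / (2 * Real.pi) := by
    intro t
    rw [hn t]
    have := Real.pi_ne_zero
    simp
  have hc : Continuous (fun t => (n t : ℝ)) := by
    simp_rw [hn']
    fun_prop
  have hcn : Continuous n := by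
    rw [Int.isClosedEmbedding_coe_real.isEmbedding.continuous_iff]
    exact hc
  have h01 : n 1 = n 0 := PreconnectedSpace.constant inferInstance hcn
  have e1 := hn 1
  have e0 := hn 0
  rw [h01, ← e0] at e1
  linear_combination e1

lemma no_enclose {Ω : Set ℂ} (hΩ : IsOpen Ω) (hs : SimplyConnectedSpace Ω)
    {γ σ : ℝ → ℂ} (hγ : Continuous γ) (hσ : Continuous σ) (hγΩ : ∀ t, γ t ∈ Ω)
    (hγΩ' : ∀ t, starRingEnd ℂ (γ t) ∈ Ω) (him : ∀ t, 0 ≤ (γ t).im)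
    {u v q : ℝ} (h0 : γ 0 = u) (h1 : γ 1 = v) (hq : σ 0 = q)
    (hbetw : (u < q ∧ q < v) ∨ (v < q ∧ q < u))
    (hp : σ 1 ∉ Ω) (hp' : starRingEnd ℂ (σ 1) ∉ Ω)
    (hne : ∀ s t, γ t ≠ σ s) (hne' : ∀ s t, γ t ≠ starRingEnd ℂ (σ s)) : False := by
  -- branch on Ω
  obtain ⟨Λ, hΛc, hΛ⟩ := Complex.exists_continuousOn_eqOn_exp_comp (U := Ω)
    hs hΩ
    (g := fun z => (z - σ 1) * (z - starRingEnd ℂ (σ 1))) (by fun_prop) (by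
      rintro ⟨z, hz, h⟩
      rcases mul_eq_zero.1 h with h | h
      · rw [sub_eq_zero] at h; exact hp (h ▸ hz)
      · rw [sub_eq_zero] at h; exact hp' (h ▸ hz))
  have hΛ' : ∀ z ∈ Ω, Complex.exp (Λ z) = (z - σ 1) * (z - starRingEnd ℂ (σ 1)) :=
    fun z hz => hΛ hz
  -- branch on the square
  obtain ⟨L, hLc, hL⟩ := Complex.exists_continuousOn_eqOn_exp_comp (U := (univ : Set (ℝ × ℝ)))
    (by
      have : ContractibleSpace (univ : Set (ℝ × ℝ)) :=
        convex_univ.contractibleSpace univ_nonempty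
      have h : SimplyConnectedSpace (univ : Set (ℝ × ℝ)) := inferInstance
      exact h) isOpen_univ
    (g := fun x => (γ x.2 - σ x.1) * (γ x.2 - starRingEnd ℂ (σ x.1)))
    (by
      apply Continuous.continuousOn
      have : Continuous fun x : ℝ × ℝ => starRingEnd ℂ (σ x.1) :=
        Complex.continuous_conj.comp (hσ.comp continuous_fst)
      fun_prop) (by
      rintro ⟨⟨s, t⟩, -, h⟩
      rcases mul_eq_zero.1 h with h | h
      · exact hne _ _ (sub_eq_zero.1 h)
      · exact hne' _ _ (sub_eq_zero.1 h))
  replace hLc : Continuous L := continuousOn_univ.1 hLc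
  have hL' : ∀ s t, Complex.exp (L (s, t)) = (γ t - σ s) * (γ t - starRingEnd ℂ (σ s)) :=
    fun s t => hL (mem_univ (s, t))
  have c1 : Continuous fun t => Λ (γ t) := hΛc.comp_continuous hγ hγΩ
  have c2 : Continuous fun t => Λ (starRingEnd ℂ (γ t)) :=
    hΛc.comp_continuous (Complex.continuous_conj.comp hγ) hγΩ'
  have A1 := const_of_exp_eq (f := fun t => L (1, t)) (g := fun t => Λ (γ t)) (by fun_prop) c1
    (by intro t; rw [hL', hΛ' _ (hγΩ t)])
  have A2 := const_of_exp_eq (f := fun t => Λ (γ t))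
    (g := fun t => starRingEnd ℂ (Λ (starRingEnd ℂ (γ t)))) c1
    (Complex.continuous_conj.comp c2) (by
      intro t
      rw [Complex.exp_conj, hΛ' _ (hγΩ t), hΛ' _ (hγΩ' t)]
      simp; ring)
  have key : ∀ w : ℝ, (∀ s, (w : ℂ) ≠ σ s) → ∀ s, Complex.exp ((Real.log (normSq (w - σ s)) : ℝ))
      = (w - σ s) * (w - starRingEnd ℂ (σ s)) := by
    intro w hw s
    have : 0 < normSq (w - σ s) := normSq_pos.2 (sub_ne_zero.2 (hw s))
    rw [← Complex.ofReal_exp, Real.exp_log this, ← Complex.mul_conj]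
    simp
  have hcl : ∀ w : ℝ, (∀ s, (w : ℂ) ≠ σ s) →
      Continuous fun s => ((Real.log (normSq (w - σ s)) : ℝ) : ℂ) := by
    intro w hw
    have : Continuous fun s => normSq (w - σ s) := by
      exact Complex.continuous_normSq.comp (by fun_prop)
    exact Complex.continuous_ofReal.comp (this.log fun s => by
      simpa [sub_eq_zero] using hw s)
  have hu : ∀ s, (u : ℂ) ≠ σ s := fun s => h0 ▸ hne s 0
  have hv : ∀ s, (v : ℂ) ≠ σ s := fun s => h1 ▸ hne s 1
  have A3 := const_of_exp_eq (f := fun s => L (s, 0))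
    (g := fun s => ((Real.log (normSq (u - σ s)) : ℝ) : ℂ)) (by fun_prop) (hcl u hu) (by
      intro s; rw [hL', key u hu, h0])
  have A4 := const_of_exp_eq (f := fun s => L (s, 1))
    (g := fun s => ((Real.log (normSq (v - σ s)) : ℝ) : ℂ)) (by fun_prop) (hcl v hv) (by
      intro s; rw [hL', key v hv, h1])
  have c5 : Continuous fun t => Complex.log (-Complex.I * (γ t - q)) := by
    refine Continuous.clog (by fun_prop) ?_
    intro t
    have hnq : γ t - q ≠ 0 := by rw [← hq]; exact sub_ne_zero.2 (hne 0 t)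
    rw [Complex.mem_slitPlane_iff]
    by_cases hi : (γ t).im = 0
    · right
      intro h
      apply hnq
      apply Complex.ext
      · have : q - (γ t).re = 0 := by simpa using h
        simp; linarith
      · simpa using hi
    · left
      have := lt_of_le_of_ne (him t) (Ne.symm hi)
      simpa using this
  have A5 := const_of_exp_eq (f := fun t => L (0, t))
    (g := fun t => 2 * Complex.log (-Complex.I * (γ t - q)) + Real.pi * Complex.I) (by fun_prop)
    (by fun_prop) (by
      intro t
      have hnq : γ t - q ≠ 0 := by rw [← hq]; exact sub_ne_zero.2 (hne 0 t)
      rw [hL', Complex.exp_add, Complex.exp_pi_mul_I, two_mul, Complex.exp_add, Complex.exp_log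
        (mul_ne_zero (neg_ne_zero.2 Complex.I_ne_zero) hnq), hq, Complex.conj_ofReal]
      linear_combination ((γ t - q)^2) * Complex.I_sq)
  have hpos : ∀ r : ℝ, 0 < r → (Complex.log (-Complex.I * r)).im = - (Real.pi / 2) := by
    intro r hr
    rw [Complex.log_im, mul_comm, Complex.arg_real_mul _ hr, Complex.arg_neg_I]
  have hneg : ∀ r : ℝ, r < 0 → (Complex.log (-Complex.I * r)).im = Real.pi / 2 := by
    intro r hr
    rw [show -Complex.I * r = ((-r : ℝ) : ℂ) * Complex.I by push_cast; ring,
      Complex.log_im, Complex.arg_real_mul _ (by linarith), Complex.arg_I]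
  have B1 := congrArg Complex.im A1
  have B2 := congrArg Complex.im A2
  have B3 := congrArg Complex.im A3
  have B4 := congrArg Complex.im A4
  have B5 := congrArg Complex.im A5
  simp only [h0, h1, Complex.sub_im, Complex.conj_ofReal, Complex.conj_im, Complex.ofReal_im]
    at B1 B2 B3 B4
  have e : ∀ w : ℝ, (2 * Complex.log (-Complex.I * ((w : ℂ) - q)) + Real.pi * Complex.I).im
      = 2 * (Complex.log (-Complex.I * ((w - q : ℝ) : ℂ))).im + Real.pi := by
    intro w; push_cast; simp
  simp only [h0, h1, Complex.sub_im, e] at B5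
  have hpi := Real.pi_pos
  rcases hbetw with ⟨a, b⟩ | ⟨a, b⟩
  · rw [hpos (v - q) (by linarith), hneg (u - q) (by linarith)] at B5
    linarith
  · rw [hneg (v - q) (by linarith), hpos (u - q) (by linarith)] at B5
    linarith

lemma frontier_comp {S : Set ℂ} (hS : IsOpen S) {x z : ℂ}
    (hz : z ∈ frontier (connectedComponentIn S x)) : z ∉ S := by
  intro hzS
  have ho : IsOpen (connectedComponentIn S x) := hS.connectedComponentIn
  have hoz : IsOpen (connectedComponentIn S z) := hS.connectedComponentIn
  rw [ho.frontier_eq] at hz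
  obtain ⟨y, hy1, hy2⟩ := mem_closure_iff.1 hz.1 _ hoz (mem_connectedComponentIn hzS)
  apply hz.2
  rw [connectedComponentIn_eq hy2, ← connectedComponentIn_eq hy1]
  exact mem_connectedComponentIn hzS

lemma valley {Ω E : Set ℂ} {H : ℂ → ℝ} {c : ℝ} (hΩ : IsOpen Ω) (hb : Bornology.IsBounded Ω)
    (hs : SimplyConnectedSpace Ω) (hcj : ∀ z ∈ Ω, starRingEnd ℂ z ∈ Ω)
    (hEr : ∀ z ∈ E, z.im = 0)
    (hc : ContinuousOn H (closure Ω)) (hsym : ∀ z ∈ Ω, H (starRingEnd ℂ z) = H z)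
    (hh : ∀ z ∈ Ω \ E, LocRe H z) (hE : ∀ z ∈ E, H z < c) (hfr : ∀ z ∈ frontier Ω, c < H z)
    {x₁ x₂ x₃ : ℝ} (h12 : x₁ < x₂) (h23 : x₂ < x₃) (m1 : (x₁ : ℂ) ∈ Ω) (m2 : (x₂ : ℂ) ∈ Ω)
    (m3 : (x₃ : ℂ) ∈ Ω) (v1 : c < H x₁) (v2 : H x₂ < c) (v3 : c < H x₃)
    (hgap : ∀ e : ℝ, (e : ℂ) ∈ E → e < x₁ ∨ x₃ < e) : False := by
  have hcΩ : ContinuousOn H Ω := hc.mono subset_closure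
  -- the sublevel component reaches E
  let S : Set ℂ := Ω ∩ H ⁻¹' Iio c
  have hSo : IsOpen S := hcΩ.isOpen_inter_preimage hΩ isOpen_Iio
  have hx2S : (x₂ : ℂ) ∈ S := ⟨m2, v2⟩
  let V := connectedComponentIn S x₂
  have hVo : IsOpen V := hSo.connectedComponentIn
  have hVS : V ⊆ S := connectedComponentIn_subset _ _
  have hVΩ : V ⊆ Ω := hVS.trans inter_subset_left
  have hx2V : (x₂ : ℂ) ∈ V := mem_connectedComponentIn hx2S
  have hVE : ∃ e ∈ V, e ∈ E := by
    by_contra hcon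
    push Not at hcon
    have := min_principle hVo (hb.subset hVΩ) (hc.mono (closure_mono hVΩ))
      (fun z hz => hh z ⟨hVΩ hz, hcon z hz⟩) (M := c) (by
        intro z hz
        have hzS := frontier_comp hSo hz
        have hzc : z ∈ closure Ω := closure_mono hVΩ (frontier_subset_closure hz)
        by_cases hzΩ : z ∈ Ω
        · by_contra hlt
          push Not at hlt
          exact hzS ⟨hzΩ, hlt⟩
        · exact (hfr z (by rw [hΩ.frontier_eq]; exact ⟨hzc, hzΩ⟩)).le) _ hx2V
    linarith
  obtain ⟨e', heV, heE⟩ := hVE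
  obtain ⟨e, rfl⟩ : ∃ e : ℝ, e' = (e : ℂ) :=
    ⟨e'.re, Complex.ext (by simp) (by simpa using hEr _ heE)⟩
  -- superlevel components reach the frontier
  let T : Set ℂ := Ω ∩ H ⁻¹' Ioi c
  have hTo : IsOpen T := hcΩ.isOpen_inter_preimage hΩ isOpen_Ioi
  have hreach : ∀ x ∈ T, ∃ p ∈ closure (connectedComponentIn T x), p ∉ Ω := by
    intro x hx
    by_contra hcon
    push Not at hcon
    have hWΩ : connectedComponentIn T x ⊆ Ω :=
      (connectedComponentIn_subset _ _).trans inter_subset_left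
    have := max_principle (U := connectedComponentIn T x) hTo.connectedComponentIn
      (hb.subset hWΩ) (hc.mono (closure_mono hWΩ))
      (fun z hz => hh z ⟨hWΩ hz, fun hzE => by
        have h1 := hE z hzE
        have h2 : c < H z := (connectedComponentIn_subset _ _ hz).2
        linarith⟩) (M := c) (by
        intro z hz
        have hzT := frontier_comp hTo hz
        have hzΩ := hcon z (frontier_subset_closure hz)
        by_contra hlt
        push Not at hlt
        exact hzT ⟨hzΩ, hlt⟩) _ (mem_connectedComponentIn hx)
    have h2 : c < H x := hx.2
    linarith
  -- path in V
  have hVp : IsPathConnected V :=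
    (hVo.isConnected_iff_isPathConnected).1 (isConnected_connectedComponentIn_iff.2 hx2S)
  obtain ⟨g, hg⟩ := hVp.joinedIn _ hx2V _ heV
  have hgV : ∀ t, g.extend t ∈ V := by
    intro t
    have : g.extend t ∈ range g.extend := mem_range_self t
    rw [Path.extend_range] at this
    obtain ⟨s, hs⟩ := this
    rw [← hs]; exact hg s
  let γ : ℝ → ℂ := fun t => ((g.extend t).re : ℂ) + (|(g.extend t).im| : ℝ) * Complex.I
  have hgc : Continuous g.extend := g.continuous_extend
  have hγc : Continuous γ := by
    have h1 : Continuous fun t => (g.extend t).re := Complex.continuous_re.comp hgc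
    have h2 : Continuous fun t => |(g.extend t).im| := (Complex.continuous_im.comp hgc).abs
    exact (Complex.continuous_ofReal.comp h1).add
      ((Complex.continuous_ofReal.comp h2).mul continuous_const)
  have hγor : ∀ t, γ t = g.extend t ∨ γ t = starRingEnd ℂ (g.extend t) := by
    intro t
    rcases abs_choice (g.extend t).im with h | h
    · left; apply Complex.ext <;> simp [γ, h]
    · right; apply Complex.ext <;> simp [γ, h]
  have hSc : ∀ z ∈ S, starRingEnd ℂ z ∈ S := fun z hz => ⟨hcj z hz.1, by
    have := hsym z hz.1
    have h2 : H z < c := hz.2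
    simp only [mem_preimage, mem_Iio]; linarith⟩
  have hγS : ∀ t, γ t ∈ S := by
    intro t
    rcases hγor t with h | h <;> rw [h]
    · exact hVS (hgV t)
    · exact hSc _ (hVS (hgV t))
  -- compactness of the trace of γ
  have hγrange : ∀ t, γ t ∈ γ '' Icc 0 1 := by
    intro t
    refine ⟨projIcc 0 1 zero_le_one t, (projIcc 0 1 zero_le_one t).2, ?_⟩
    simp [γ, Path.extend, IccExtend]
  let K : Set ℂ := γ '' Icc 0 1 ∪ (starRingEnd ℂ) '' (γ '' Icc 0 1)
  have hKc : IsCompact K := by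
    have h1 : IsCompact (γ '' Icc 0 1) := isCompact_Icc.image hγc
    exact h1.union (h1.image Complex.continuous_conj)
  have hKS : K ⊆ S := by
    rintro z (⟨t, -, rfl⟩ | ⟨_, ⟨t, -, rfl⟩, rfl⟩)
    · exact hγS t
    · exact hSc _ (hγS t)
  -- main contradiction
  have main : ∀ q : ℝ, (q : ℂ) ∈ T → ((x₂ < q ∧ q < e) ∨ (e < q ∧ q < x₂)) → False := by
    intro q hq hbt
    obtain ⟨p, hp, hpΩ⟩ := hreach q hq
    have hpK : Kᶜ ∈ nhds p :=
      hKc.isClosed.isOpen_compl.mem_nhds (fun h => hpΩ (hKS h).1)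
    obtain ⟨r, hr, hball⟩ := Metric.mem_nhds_iff.1 hpK
    let W := connectedComponentIn T q
    have hWT : W ⊆ T := connectedComponentIn_subset _ _
    have hqW : (q : ℂ) ∈ W := mem_connectedComponentIn hq
    have hWo : IsOpen W := hTo.connectedComponentIn
    have hWc : IsConnected W := isConnected_connectedComponentIn_iff.2 hq
    have hUc : IsConnected (W ∪ ball p r) := by
      refine IsConnected.union ?_ hWc ((convex_ball p r).isConnected ⟨p, mem_ball_self hr⟩)
      obtain ⟨y, hy1, hy2⟩ := mem_closure_iff.1 hp _ isOpen_ball (mem_ball_self hr)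
      exact ⟨y, hy2, hy1⟩
    have hUp : IsPathConnected (W ∪ ball p r) :=
      ((hWo.union isOpen_ball).isConnected_iff_isPathConnected).1 hUc
    obtain ⟨f, hf⟩ := hUp.joinedIn _ (Or.inl hqW) _ (Or.inr (mem_ball_self hr))
    have hfU : ∀ t, f.extend t ∈ W ∪ ball p r := by
      intro t
      have : f.extend t ∈ range f.extend := mem_range_self t
      rw [Path.extend_range] at this
      obtain ⟨s, hs⟩ := this
      rw [← hs]; exact hf s
    have hfK : ∀ t, f.extend t ∉ K := by
      intro t ht
      rcases hfU t with h | h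
      · have h1 : c < H (f.extend t) := (hWT h).2
        have h2 : H (f.extend t) < c := (hKS ht).2
        linarith
      · exact hball h ht
    refine no_enclose hΩ hs hγc f.continuous_extend (fun t => (hγS t).1)
      (fun t => hcj _ (hγS t).1) ?_ (u := x₂) (v := e) (q := q) ?_ ?_ ?_ hbt ?_ ?_ ?_ ?_
    · intro t; simp [γ]
    · simp [γ]
    · simp [γ]
    · simp
    · simpa using hpΩ
    · rw [Path.extend_one]
      intro h
      apply hpΩ
      simpa using hcj _ h
    · intro s t h
      apply hfK s
      rw [← h]; exact Or.inl (hγrange t)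
    · intro s t h
      apply hfK s
      refine Or.inr ⟨γ t, hγrange t, ?_⟩
      rw [h]; simp
  rcases hgap e heE with h | h
  · exact main x₁ ⟨m1, v1⟩ (Or.inr ⟨h, h12⟩)
  · exact main x₃ ⟨m3, v3⟩ (Or.inl ⟨h23, h⟩)

lemma strict_min {f : ℝ → ℝ} (h0 : deriv f 0 = 0) (h2 : 0 < deriv (deriv f) 0)
    (hc : ContinuousAt f 0) : ∃ δ > 0, ∀ t : ℝ, t ≠ 0 → |t| < δ → f 0 < f t := by
  obtain ⟨δ, hδ, h⟩ := Metric.eventually_nhds_iff.1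
    (eventually_nhdsWithin_sign_eq_of_deriv_pos h2 h0)
  have hs : ∀ t : ℝ, |t| < δ → SignType.sign (deriv f t) = SignType.sign t := by
    intro t ht
    have := h (y := t) (by simpa [Real.dist_eq] using ht)
    simpa using this
  have hcont : ∀ t : ℝ, |t| < δ → ContinuousAt f t := by
    intro t ht
    by_cases h' : t = 0
    · rw [h']; exact hc
    · have : deriv f t ≠ 0 := by
        intro h''
        have := hs t ht
        rw [h'', sign_zero] at this
        exact h' (sign_eq_zero_iff.1 this.symm)
      exact (differentiableAt_of_deriv_ne_zero this).continuousAt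
  refine ⟨δ, hδ, fun t ht0 ht => ?_⟩
  rcases lt_or_gt_of_ne ht0 with hlt | hgt
  · have hm : StrictAntiOn f (Icc t 0) := by
      apply strictAntiOn_of_deriv_neg (convex_Icc _ _)
      · intro y hy
        exact (hcont y (by rw [abs_lt] at *; constructor <;> linarith [hy.1, hy.2])).continuousWithinAt
      · intro y hy
        rw [interior_Icc] at hy
        have := hs y (by rw [abs_lt] at *; constructor <;> linarith [hy.1, hy.2])
        rw [sign_neg hy.2] at this
        exact sign_eq_neg_one_iff.1 this
    exact hm ⟨le_rfl, hlt.le⟩ ⟨hlt.le, le_rfl⟩ hlt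
  · have hm : StrictMonoOn f (Icc 0 t) := by
      apply strictMonoOn_of_deriv_pos (convex_Icc _ _)
      · intro y hy
        exact (hcont y (by rw [abs_lt] at *; constructor <;> linarith [hy.1, hy.2])).continuousWithinAt
      · intro y hy
        rw [interior_Icc] at hy
        have := hs y (by rw [abs_lt] at *; constructor <;> linarith [hy.1, hy.2])
        rw [sign_pos hy.1] at this
        exact sign_eq_one_iff.1 this
    exact hm ⟨le_rfl, hgt.le⟩ ⟨hgt.le, le_rfl⟩ hgt

lemma locRe_of_harmonic {G : ℂ → ℝ} {U : Set ℂ} (hU : IsOpen U) (h : IsHarmonicOn G U) :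
    ∀ z ∈ U, LocRe G z := by
  have hH : InnerProductSpace.HarmonicOnNhd G U := by
    intro z hz
    refine ⟨h.1.contDiffAt (hU.mem_nhds hz), ?_⟩
    filter_upwards [hU.mem_nhds hz] with w hw
    have hcd : ContDiffAt ℝ 2 G w := h.1.contDiffAt (hU.mem_nhds hw)
    have hd : DifferentiableAt ℝ (fderiv ℝ G) w :=
      (hcd.fderiv_right (m := 1) (by norm_num)).differentiableAt (by norm_num)
    have hv : ∀ v : ℂ, fderiv ℝ (fun y => fderiv ℝ G y v) w v = fderiv ℝ (fderiv ℝ G) w v v := by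
      intro v
      rw [fderiv_clm_apply hd (differentiableAt_const v)]
      simp
    have := h.2 w hw
    rw [hv, hv] at this
    rw [InnerProductSpace.laplacian_eq_iteratedFDeriv_complexPlane]
    simpa [iteratedFDeriv_two_apply] using this
  intro z hz
  obtain ⟨r, hr, hb⟩ := Metric.isOpen_iff.1 hU z hz
  obtain ⟨F, hF, hFe⟩ := InnerProductSpace.HarmonicOnNhd.exists_analyticOnNhd_ball_re_eq
    (f := G) (z := z) (R := r) (fun w hw => hH w (hb hw))
  refine ⟨F, hF z (mem_ball_self hr), ?_⟩
  filter_upwards [ball_mem_nhds z hr] with w hw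
  exact (hFe hw).symm

/-- **Theorem 7.2 (ii).** Each proper complementary interval contains exactly
one critical point of the Green-type function `G`; it is simple, i.e. a
nondegenerate (strict) local maximum of `G` along `ℝ`. -/
theorem green_function_unique_simple_critical_point_in_complementary_interval
    (Ω : Set ℂ) (hΩopen : IsOpen Ω) (hΩbdd : Bornology.IsBounded Ω)
    (hΩsc : SimplyConnectedSpace Ω)
    (hΩconj : (fun z => (starRingEnd ℂ) z) '' Ω = Ω)
    (E : Set ℂ) (hEne : E.Nonempty) (hEcpt : IsCompact E)
    (hEsub : E ⊆ Ω) (hEreal : ∀ z ∈ E, z.im = 0)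
    (G : ℂ → ℝ) (hGcont : ContinuousOn G (closure Ω))
    (hGbdry : ∀ z ∈ frontier Ω, G z = 1)
    (hGzero : ∀ z ∈ E, G z = 0)
    (hGharm : IsHarmonicOn G (Ω \ E))
    (I : Set ℂ) (x : ℂ) (hxI : x ∈ I)
    (hIcomp : I = connectedComponentIn ({z ∈ Ω | z.im = 0} \ E) x)
    (hIbdd : Bornology.IsBounded I)
    (hIcl : closure I ⊆ Ω)
    (hIends : closure I \ I ⊆ E) :
    ∃ ω ∈ I, fderiv ℝ G ω = 0 ∧
      deriv (deriv (fun t : ℝ => G (ω + (t : ℂ)))) 0 < 0 ∧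
      ∀ ω' ∈ I, fderiv ℝ G ω' = 0 → ω' = ω := by
  have hU : IsOpen (Ω \ E) := hΩopen.sdiff hEcpt.isClosed
  have hL := locRe_of_harmonic hU hGharm
  have hcj : ∀ z ∈ Ω, starRingEnd ℂ z ∈ Ω := by
    intro z hz
    rw [← hΩconj]
    exact ⟨z, hz, rfl⟩
  have hcj' : ∀ z, starRingEnd ℂ z ∈ Ω → z ∈ Ω := fun z hz => by simpa using hcj _ hz
  have hEcj : ∀ z ∈ E, starRingEnd ℂ z = z := fun z hz => Complex.conj_eq_iff_im.2 (hEreal z hz)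
  have hclcj : ∀ z ∈ closure Ω, starRingEnd ℂ z ∈ closure Ω := fun z hz =>
    map_mem_closure Complex.continuous_conj hz hcj
  have hfrU : ∀ z ∈ frontier (Ω \ E), z ∈ E ∨ z ∈ frontier Ω := by
    intro z hz
    rw [hU.frontier_eq] at hz
    by_cases hzΩ : z ∈ Ω
    · left; by_contra hzE; exact hz.2 ⟨hzΩ, hzE⟩
    · right; rw [hΩopen.frontier_eq]; exact ⟨closure_mono sdiff_subset hz.1, hzΩ⟩
  have hUb : Bornology.IsBounded (Ω \ E) := hΩbdd.subset sdiff_subset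
  have hGcU : ContinuousOn G (closure (Ω \ E)) := hGcont.mono (closure_mono sdiff_subset)
  have hEcj' : ∀ z, starRingEnd ℂ z ∈ E → z ∈ E := fun z hz => by
    have := hEcj _ hz
    rw [Complex.conj_conj] at this
    rw [this]; exact hz
  -- symmetry
  have hsymle : ∀ z ∈ Ω, G (starRingEnd ℂ z) ≤ G z := by
    intro z hz
    by_cases hzE : z ∈ E
    · rw [hEcj z hzE]
    have := max_principle hU hUb (u := fun w => G (starRingEnd ℂ w) + - G w)
      ((ContinuousOn.comp hGcont Complex.continuous_conj.continuousOn
        (fun w hw => hclcj w (closure_mono sdiff_subset hw))).add hGcU.neg)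
      (fun w hw => (hL _ ⟨hcj w hw.1, fun h => hw.2 (hEcj' w h)⟩).conj.add (hL w hw).neg)
      (M := 0) (by
        intro w hw
        rcases hfrU w hw with h | h
        · rw [hEcj w h]; simp
        · rw [hGbdry w h, hGbdry (starRingEnd ℂ w)]
          · simp
          · rw [hΩopen.frontier_eq] at h ⊢
            exact ⟨hclcj w h.1, fun h' => h.2 (hcj' w h')⟩) z ⟨hz, hzE⟩
    linarith
  have hsym : ∀ z ∈ Ω, G (starRingEnd ℂ z) = G z := by
    intro z hz
    refine le_antisymm (hsymle z hz) ?_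
    have := hsymle _ (hcj z hz)
    rwa [Complex.conj_conj] at this
  have hG0 : ∀ z ∈ Ω, 0 ≤ G z := by
    intro z hz
    by_cases hzE : z ∈ E
    · rw [hGzero z hzE]
    refine min_principle hU hUb hGcU hL (M := 0) ?_ z ⟨hz, hzE⟩
    intro w hw
    rcases hfrU w hw with h | h
    · rw [hGzero w h]
    · rw [hGbdry w h]; norm_num
  have hG1 : ∀ z ∈ Ω, G z ≤ 1 := by
    intro z hz
    by_cases hzE : z ∈ E
    · rw [hGzero z hzE]; norm_num
    refine max_principle hU hUb hGcU hL (M := 1) ?_ z ⟨hz, hzE⟩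
    intro w hw
    rcases hfrU w hw with h | h
    · rw [hGzero w h]; norm_num
    · rw [hGbdry w h]
  -- facts on I
  have hIsub : ∀ z ∈ I, z ∈ Ω ∧ z.im = 0 ∧ z ∉ E := by
    intro z hz
    rw [hIcomp] at hz
    have := connectedComponentIn_subset _ _ hz
    exact ⟨this.1.1, this.1.2, this.2⟩
  have hIU : ∀ z ∈ I, z ∈ Ω \ E := fun z hz => ⟨(hIsub z hz).1, (hIsub z hz).2.2⟩
  have hIre : ∀ z ∈ I, ((z.re : ℝ) : ℂ) = z := fun z hz =>
    Complex.ext (by simp) (by simp [(hIsub z hz).2.1])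
  have hInhd : ∀ w ∈ I, ∃ δ > 0, ∀ t : ℝ, |t| < δ → w + (t : ℂ) ∈ I := by
    intro w hw
    obtain ⟨δ, hδ, hball⟩ := Metric.isOpen_iff.1 hU w (hIU w hw)
    refine ⟨δ, hδ, fun t ht => ?_⟩
    have hpre : IsPreconnected ((fun t : ℝ => w + (t : ℂ)) '' Ioo (-δ) δ) :=
      isPreconnected_Ioo.image _ (by fun_prop)
    have hsub := hpre.subset_connectedComponentIn (x := w)
      (F := {z ∈ Ω | z.im = 0} \ E) ⟨0, ⟨by linarith, hδ⟩, by simp⟩ (by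
        rintro _ ⟨s, hs, rfl⟩
        have := hball (a := w + (s : ℂ)) (by
          rw [mem_ball, dist_eq_norm]
          simpa [abs_lt] using hs)
        exact ⟨⟨this.1, by simp [(hIsub w hw).2.1]⟩, this.2⟩)
    have hw' := hw
    rw [hIcomp] at hw' ⊢
    rw [connectedComponentIn_eq hw']
    exact hsub ⟨t, abs_lt.1 ht, rfl⟩
  have hIord : ∀ u v m : ℝ, (u : ℂ) ∈ I → (v : ℂ) ∈ I → u ≤ m → m ≤ v → (m : ℂ) ∈ I := by
    intro u v m hu hv h1 h2
    have hpre : IsPreconnected (Complex.re '' I) := by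
      rw [hIcomp]
      exact isPreconnected_connectedComponentIn.image _ Complex.continuous_re.continuousOn
    obtain ⟨z, hz, rfl⟩ := hpre.ordConnected.out ⟨_, hu, Complex.ofReal_re u⟩
      ⟨_, hv, Complex.ofReal_re v⟩ ⟨h1, h2⟩
    rw [hIre z hz]; exact hz
  -- strict bounds
  have hGpos : ∀ w ∈ I, 0 < G w := by
    intro w hw
    by_contra hcon
    have hw0 : G w = 0 := le_antisymm (not_lt.1 hcon) (hG0 w (hIsub w hw).1)
    let K : Set ℂ := (closure Ω ∩ G ⁻¹' {0}) ∩ {z | z.re = w.re ∧ 0 ≤ z.im}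
    have hKc : IsCompact K := by
      have h1 : IsClosed (closure Ω ∩ G ⁻¹' {0}) :=
        hGcont.preimage_isClosed_of_isClosed isClosed_closure isClosed_singleton
      have h2 : IsClosed {z : ℂ | z.re = w.re ∧ 0 ≤ z.im} :=
        (isClosed_eq Complex.continuous_re continuous_const).inter
          (isClosed_le continuous_const Complex.continuous_im)
      exact hΩbdd.isCompact_closure.of_isClosed_subset (h1.inter h2)
        (fun z hz => hz.1.1)
    have hwK : w ∈ K := ⟨⟨subset_closure (hIsub w hw).1, hw0⟩, rfl, (hIsub w hw).2.1.ge⟩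
    obtain ⟨m, hm, hmax⟩ := hKc.exists_isMaxOn ⟨w, hwK⟩ Complex.continuous_im.continuousOn
    have hm0 : G m = 0 := hm.1.2
    have hmΩ : m ∈ Ω := by
      by_contra h
      have := hGbdry m (by rw [hΩopen.frontier_eq]; exact ⟨hm.1.1, h⟩)
      linarith
    have hmE : m ∉ E := by
      intro h
      apply (hIsub w hw).2.2
      have : w = m := Complex.ext hm.2.1.symm (by rw [hEreal m h, (hIsub w hw).2.1])
      rw [this]; exact h
    have hev := (hL m ⟨hmΩ, hmE⟩).neg.strong (by
      filter_upwards [hΩopen.mem_nhds hmΩ] with y hy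
      rw [hm0]; simpa using hG0 y hy)
    obtain ⟨r, hr, hball⟩ := Metric.eventually_nhds_iff.1
      (hev.and (hΩopen.mem_nhds hmΩ))
    have hd : dist (m + ((r / 2 : ℝ) : ℂ) * Complex.I) m < r := by
      rw [dist_eq_norm]; simp [abs_of_pos hr]; linarith
    obtain ⟨h1, h2⟩ := hball hd
    have : m + ((r / 2 : ℝ) : ℂ) * Complex.I ∈ K := by
      refine ⟨⟨subset_closure h2, ?_⟩, ?_, ?_⟩
      · simp only [mem_preimage, mem_singleton_iff]; linarith
      · simpa using hm.2.1
      · have := hm.2.2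
        simp; linarith
    have := hmax this
    simp at this
    linarith
  have hGlt : ∀ w ∈ I, G w < 1 := by
    intro w hw
    by_contra hcon
    have hw1 : G w = 1 := le_antisymm (hG1 w (hIsub w hw).1) (not_lt.1 hcon)
    let K : Set ℂ := closure I ∩ G ⁻¹' {1}
    have hKc : IsCompact K := by
      have h1 : IsClosed (closure I ∩ G ⁻¹' {1}) :=
        (hGcont.mono (hIcl.trans subset_closure)).preimage_isClosed_of_isClosed
          isClosed_closure isClosed_singleton
      exact hIbdd.isCompact_closure.of_isClosed_subset h1 (fun z hz => hz.1)
    have hwK : w ∈ K := ⟨subset_closure hw, hw1⟩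
    obtain ⟨m, hm, hmax⟩ := hKc.exists_isMaxOn ⟨w, hwK⟩ Complex.continuous_re.continuousOn
    have hm1 : G m = 1 := hm.2
    have hmI : m ∈ I := by
      by_contra h
      have := hGzero m (hIends ⟨hm.1, h⟩)
      linarith
    have hmΩ := (hIsub m hmI).1
    have hev := (hL m (hIU m hmI)).strong (by
      filter_upwards [hΩopen.mem_nhds hmΩ] with y hy
      rw [hm1]; exact hG1 y hy)
    obtain ⟨r, hr, hball⟩ := Metric.eventually_nhds_iff.1 hev
    obtain ⟨δ, hδ, hmδ⟩ := hInhd m hmI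
    have ht : 0 < min r δ / 2 := by positivity
    have htr : min r δ / 2 < r := by have := min_le_left r δ; linarith
    have htδ : min r δ / 2 < δ := by have := min_le_right r δ; linarith
    generalize min r δ / 2 = t at *
    have hd : dist (m + (t : ℂ)) m < r := by
      rw [dist_eq_norm]; simpa [abs_of_pos ht] using htr
    have h1 := hball hd
    have : m + (t : ℂ) ∈ K :=
      ⟨subset_closure (hmδ t (by rwa [abs_of_pos ht])), by
        simp only [mem_preimage, mem_singleton_iff]; linarith⟩
    have := hmax this
    simp at this
    linarith
  -- smoothness along the line
  have hcd : ∀ w ∈ I, ContDiffAt ℝ 2 G w := fun w hw =>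
    hGharm.1.contDiffAt (hU.mem_nhds (hIU w hw))
  have hφcd : ∀ w ∈ I, ContDiffAt ℝ 2 (fun t : ℝ => G (w + (t : ℂ))) 0 := by
    intro w hw
    have h1 : ContDiffAt ℝ 2 (fun t : ℝ => w + (t : ℂ)) 0 :=
      contDiffAt_const.add Complex.ofRealCLM.contDiff.contDiffAt
    have h2 : ContDiffAt ℝ 2 G (w + ((0 : ℝ) : ℂ)) := by simpa using hcd w hw
    exact h2.comp (0 : ℝ) h1
  have hφd : ∀ w ∈ I, deriv (fun t : ℝ => G (w + (t : ℂ))) 0 = fderiv ℝ G w 1 := by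
    intro w hw
    have h1 : HasDerivAt (fun t : ℝ => w + (t : ℂ)) 1 0 := by
      simpa using (Complex.ofRealCLM.hasDerivAt (x := (0 : ℝ))).const_add w
    have h2 : HasFDerivAt G (fderiv ℝ G w) (w + ((0 : ℝ) : ℂ)) := by
      simpa using ((hcd w hw).differentiableAt (by norm_num)).hasFDerivAt
    exact (h2.comp_hasDerivAt (0 : ℝ) h1).deriv
  -- key: critical points along the line are nondegenerate maxima
  have key : ∀ w ∈ I, deriv (fun t : ℝ => G (w + (t : ℂ))) 0 = 0 →
      deriv (deriv (fun t : ℝ => G (w + (t : ℂ)))) 0 < 0 := by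
    intro w hw hd0
    by_contra hcon
    push Not at hcon
    set φ : ℝ → ℝ := fun t : ℝ => G (w + (t : ℂ)) with hφ
    obtain ⟨B, hB⟩ := hΩbdd.isCompact_closure.exists_bound_of_continuousOn
      (f := fun z : ℂ => ((z - w) ^ 2).re) (by
        have : Continuous fun z : ℂ => ((z - w) ^ 2).re :=
          Complex.continuous_re.comp (by fun_prop)
        exact this.continuousOn)
    have hB0 : 0 ≤ B := (norm_nonneg _).trans (hB w (subset_closure (hIsub w hw).1))
    obtain ⟨m, hm0, hmG, hmG1⟩ : ∃ m > 0, m ≤ G w ∧ m ≤ 1 - G w :=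
      ⟨min (G w) (1 - G w), lt_min (hGpos w hw) (by linarith [hGlt w hw]),
        min_le_left _ _, min_le_right _ _⟩
    obtain ⟨ε, hε, hεB⟩ : ∃ ε > 0, ε * B < m / 2 := by
      refine ⟨m / (2 * (B + 1)), by positivity, ?_⟩
      rw [div_mul_eq_mul_div, div_lt_div_iff₀ (by positivity) (by norm_num)]
      nlinarith
    let H : ℂ → ℝ := fun z => G z + ε * ((z - w) ^ 2).re
    have hHb : ∀ z ∈ closure Ω, |ε * ((z - w) ^ 2).re| < m / 2 := by
      intro z hz
      rw [abs_mul, abs_of_pos hε]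
      have := hB z hz
      rw [Real.norm_eq_abs] at this
      exact (mul_le_mul_of_nonneg_left this hε.le).trans_lt hεB
    have hwcj : starRingEnd ℂ w = w := Complex.conj_eq_iff_im.2 (hIsub w hw).2.1
    have hHt : ∀ t : ℝ, H (w + (t : ℂ)) = φ t + ε * t ^ 2 := by
      intro t
      have : ((w + (t : ℂ) - w) ^ 2).re = t ^ 2 := by
        rw [add_sub_cancel_left, ← Complex.ofReal_pow, Complex.ofReal_re]
      simp only [H, this, hφ]
    -- strict minimum of the perturbed function
    have hφ1 : ∀ᶠ t in nhds (0 : ℝ), DifferentiableAt ℝ φ t := by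
      filter_upwards [(hφcd w hw).eventually (by simp)] with t ht
      exact ht.differentiableAt (by norm_num)
    have hφ2 : DifferentiableAt ℝ (deriv φ) 0 := by
      have h1 : ContDiffAt ℝ 1 (deriv φ) 0 := by
        exact ((hφcd w hw).fderiv_right (m := 1) (by norm_num)).clm_apply contDiffAt_const
      exact h1.differentiableAt (by norm_num)
    have hsq : ∀ t : ℝ, HasDerivAt (fun t : ℝ => ε * t ^ 2) (ε * (2 * t)) t := by
      intro t
      simpa using (hasDerivAt_pow 2 t).const_mul ε
    have hψ1 : deriv (fun t => φ t + ε * t ^ 2) =ᶠ[nhds 0] fun t => deriv φ t + ε * (2 * t) := by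
      filter_upwards [hφ1] with t ht
      exact (ht.hasDerivAt.add (hsq t)).deriv
    have hψ2 : deriv (deriv (fun t => φ t + ε * t ^ 2)) 0 = deriv (deriv φ) 0 + ε * 2 := by
      rw [hψ1.deriv_eq]
      have h3 : HasDerivAt (fun t : ℝ => ε * (2 * t)) (ε * 2) 0 := by
        simpa using ((hasDerivAt_id (0 : ℝ)).const_mul 2).const_mul ε
      exact (hφ2.hasDerivAt.add h3).deriv
    obtain ⟨δ, hδ, hmin⟩ := strict_min (f := fun t => φ t + ε * t ^ 2)
      (by rw [hψ1.self_of_nhds]; simp [hd0]) (by rw [hψ2]; linarith)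
      ((hφcd w hw).continuousAt.add (hsq 0).continuousAt)
    obtain ⟨δ', hδ', hIδ⟩ := hInhd w hw
    have ht : 0 < min δ δ' / 2 := by positivity
    have htr : min δ δ' / 2 < δ := by have := min_le_left δ δ'; linarith
    have htδ : min δ δ' / 2 < δ' := by have := min_le_right δ δ'; linarith
    generalize min δ δ' / 2 = t at *
    have e1 := hmin t ht.ne' (by rwa [abs_of_pos ht])
    have e2 := hmin (-t) (by linarith) (by rwa [abs_neg, abs_of_pos ht])
    have hφ0 : φ 0 = G w := by simp [hφ]
    simp only [← hHt] at e1 e2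
    have hHw : H (w + ((0 : ℝ) : ℂ)) = G w := by rw [hHt, hφ0]; simp
    rw [hHw] at e1 e2
    have hx1 : ((w.re - t : ℝ) : ℂ) = w + ((-t : ℝ) : ℂ) := by
      push_cast; rw [hIre w hw]; ring
    have hx3 : ((w.re + t : ℝ) : ℂ) = w + ((t : ℝ) : ℂ) := by
      push_cast; rw [hIre w hw]
    obtain ⟨c, hc0, hc1⟩ := exists_between
      (show G w < min (min (H (w + (t : ℂ))) (H (w + ((-t : ℝ) : ℂ)))) (G w + m / 2) from
        lt_min (lt_min e1 e2) (by linarith))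
    rw [lt_min_iff, lt_min_iff] at hc1
    have hHw' : H ((w.re : ℝ) : ℂ) = G w := by rw [hIre w hw, ← hHw]; simp
    refine valley (H := H) (c := c) (E := E) hΩopen hΩbdd hΩsc hcj hEreal ?_ ?_ ?_ ?_ ?_
      (x₁ := w.re - t) (x₂ := w.re) (x₃ := w.re + t) (by linarith) (by linarith) ?_ ?_ ?_ ?_ ?_ ?_ ?_
    · have : Continuous fun z : ℂ => ε * ((z - w) ^ 2).re :=
        continuous_const.mul (Complex.continuous_re.comp (by fun_prop))
      exact hGcont.add this.continuousOn
    · intro z hz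
      have h1 : starRingEnd ℂ z - w = starRingEnd ℂ (z - w) := by rw [map_sub, hwcj]
      simp only [H]
      rw [hsym z hz, h1, ← map_pow, Complex.conj_re]
    · intro z hz
      refine (hL z hz).add ⟨fun y => (ε : ℂ) * (y - w) ^ 2, by fun_prop, ?_⟩
      filter_upwards with y
      rw [Complex.re_ofReal_mul]
    · intro z hz
      have h1 := (abs_lt.1 (hHb z (subset_closure (hEsub hz)))).2
      have h2 := hGzero z hz
      simp only [H]
      linarith
    · intro z hz
      have h1 := (abs_lt.1 (hHb z (frontier_subset_closure hz))).1
      have h2 := hGbdry z hz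
      simp only [H]
      linarith [hc1.2]
    · rw [hx1]; exact (hIsub _ (hIδ _ (by rwa [abs_neg, abs_of_pos ht]))).1
    · rw [hIre w hw]; exact (hIsub w hw).1
    · rw [hx3]; exact (hIsub _ (hIδ _ (by rwa [abs_of_pos ht]))).1
    · rw [hx1]; exact hc1.1.2
    · rw [hHw']; exact hc0
    · rw [hx3]; exact hc1.1.1
    · intro e he
      by_contra hcon
      push Not at hcon
      have h1 := hIδ (e - w.re) (by rw [abs_lt]; constructor <;> linarith [hcon.1, hcon.2])
      apply (hIsub _ h1).2.2
      push_cast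
      rw [hIre w hw]
      simpa using he
  have smax : ∀ w ∈ I, deriv (fun t : ℝ => G (w + (t : ℂ))) 0 = 0 →
      ∃ δ > 0, ∀ t : ℝ, t ≠ 0 → |t| < δ → G (w + (t : ℂ)) < G w := by
    intro w hw hd0
    have hk := key w hw hd0
    have hneg : deriv (fun t : ℝ => - G (w + (t : ℂ)))
        = fun t => - deriv (fun t : ℝ => G (w + (t : ℂ))) t := by
      funext t; exact deriv.fun_neg
    obtain ⟨δ, hδ, h⟩ := strict_min (f := fun t : ℝ => - G (w + (t : ℂ)))
      (by rw [hneg]; simp [hd0])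
      (by rw [hneg, deriv.fun_neg]; linarith)
      (hφcd w hw).continuousAt.neg
    refine ⟨δ, hδ, fun t h0 ht => ?_⟩
    have := h t h0 ht
    simp only [Complex.ofReal_zero, add_zero] at this
    linarith
  have uniq : ∀ u v : ℝ, (u : ℂ) ∈ I → (v : ℂ) ∈ I → u < v →
      deriv (fun t : ℝ => G ((u : ℂ) + (t : ℂ))) 0 = 0 →
      deriv (fun t : ℝ => G ((v : ℂ) + (t : ℂ))) 0 = 0 → False := by
    intro u v hu hv huv du dv
    have hcont : ContinuousOn (fun s : ℝ => G (s : ℂ)) (Icc u v) :=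
      ContinuousOn.comp hGcont Complex.continuous_ofReal.continuousOn
        (fun s hs => subset_closure (hIsub _ (hIord u v s hu hv hs.1 hs.2)).1)
    obtain ⟨m, hm, hmin⟩ := isCompact_Icc.exists_isMinOn ⟨u, le_rfl, huv.le⟩ hcont
    have hmI : (m : ℂ) ∈ I := hIord u v m hu hv hm.1 hm.2
    have hmin' : ∀ s ∈ Icc u v, G (m : ℂ) ≤ G (s : ℂ) := fun s hs => hmin hs
    -- m is critical
    have dm : deriv (fun t : ℝ => G ((m : ℂ) + (t : ℂ))) 0 = 0 := by
      rcases eq_or_lt_of_le hm.1 with h | h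
      · rw [← h]; exact du
      rcases eq_or_lt_of_le hm.2 with h' | h'
      · rw [h']; exact dv
      apply IsLocalMin.deriv_eq_zero
      have : Ioo (u - m) (v - m) ∈ nhds (0 : ℝ) := Ioo_mem_nhds (by linarith) (by linarith)
      filter_upwards [this] with t ht
      have := hmin' (m + t) ⟨by linarith [ht.1], by linarith [ht.2]⟩
      simpa using this
    obtain ⟨δ, hδ, hs⟩ := smax _ hmI dm
    have ht : 0 < min δ (v - u) / 2 := by
      have : 0 < v - u := by linarith
      positivity
    have htr : min δ (v - u) / 2 < δ := by have := min_le_left δ (v - u); linarith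
    have htδ : min δ (v - u) / 2 ≤ (v - u) / 2 := by
      have := min_le_right δ (v - u); linarith
    generalize min δ (v - u) / 2 = t at *
    by_cases hmt : m + t ≤ v
    · have h1 := hs t ht.ne' (by rwa [abs_of_pos ht])
      have h2 := hmin' (m + t) ⟨by linarith [hm.1], hmt⟩
      push_cast at h2
      linarith
    · have h1 := hs (-t) (by linarith) (by rwa [abs_neg, abs_of_pos ht])
      have h2 := hmin' (m + -t) ⟨by linarith, by linarith [hm.2]⟩
      push_cast at h1 h2
      linarith
  -- existence
  obtain ⟨ω, hω, hmax⟩ := hIbdd.isCompact_closure.exists_isMaxOn ⟨x, subset_closure hxI⟩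
    (hGcont.mono (hIcl.trans subset_closure))
  have hωI : ω ∈ I := by
    by_contra h
    have h1 := hGzero ω (hIends ⟨hω, h⟩)
    have h2 : G x ≤ G ω := hmax (subset_closure hxI)
    linarith [hGpos x hxI]
  have hωd : deriv (fun t : ℝ => G (ω + (t : ℂ))) 0 = 0 := by
    apply IsLocalMax.deriv_eq_zero
    obtain ⟨δ, hδ, h⟩ := hInhd ω hωI
    filter_upwards [Metric.ball_mem_nhds (0 : ℝ) hδ] with t ht
    have := hmax (subset_closure (h t (by simpa using ht)))
    simpa using this
  refine ⟨ω, hωI, ?_, key ω hωI hωd, ?_⟩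
  · have h1 : fderiv ℝ G ω 1 = 0 := by rw [← hφd ω hωI, hωd]
    have hωcj : starRingEnd ℂ ω = ω := Complex.conj_eq_iff_im.2 (hIsub ω hωI).2.1
    have hG : HasFDerivAt G (fderiv ℝ G ω) ω :=
      ((hcd ω hωI).differentiableAt (by norm_num)).hasFDerivAt
    have hG' : HasFDerivAt G (fderiv ℝ G ω) (Complex.conjCLE ω) := by
      rw [Complex.conjCLE_apply, hωcj]; exact hG
    have hcomp := hG'.comp ω Complex.conjCLE.hasFDerivAt
    have heq : (G ∘ Complex.conjCLE) =ᶠ[nhds ω] G := by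
      filter_upwards [hΩopen.mem_nhds (hIsub ω hωI).1] with y hy
      simpa using hsym y hy
    have h2 := (hcomp.congr_of_eventuallyEq heq.symm).unique hG
    have h3 := congrArg (fun A : ℂ →L[ℝ] ℝ => A Complex.I) h2
    simp at h3
    have h4 : fderiv ℝ G ω Complex.I = 0 := by linarith
    ext z
    have hz : z = z.re • (1 : ℂ) + z.im • Complex.I := by
      apply Complex.ext <;> simp
    rw [hz, map_add, map_smul, map_smul, h1, h4]
    simp
  · intro ω' hω' hd'
    have hd'' : deriv (fun t : ℝ => G (ω' + (t : ℂ))) 0 = 0 := by rw [hφd ω' hω', hd']; rfl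
    have a1 := hIre ω hωI
    have a2 := hIre ω' hω'
    rcases lt_trichotomy ω'.re ω.re with h | h | h
    · refine (uniq ω'.re ω.re ?_ ?_ h ?_ ?_).elim <;> simp only [a1, a2] <;> assumption
    · rw [← a1, ← a2, h]
    · refine (uniq ω.re ω'.re ?_ ?_ h ?_ ?_).elim <;> simp only [a1, a2] <;> assumption
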